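/- Let ε ∈ (0,1), δ ∈ (0,1), let G be a d-regular simple graph on n vertices (d > 0), and let X = (X₁,…,Xₙ) be a random vector with each Xᵤ taking values in {0,1}. Suppose: (i) for every edge (u,v) of G, Pr[Xᵤ = 1 ∧ Xᵥ = 1] = 0; (ii) Σ_{u∈[n]} Pr[Xᵤ = 1] ≥ (1/2 − δ)·n; and (iii) the local correlation bound (1/(n·d)) · Σ_{(u,v): u adjacent to v} Pr[Xᵤ = 1]² · Pr[Xᵥ = 1]² ≤ ε⁵/50 holds, where the sum is over ordered pairs of adjacent vertices. Let γ = ε/100 and define S = { u ∈ [n] : Pr[Xᵤ = 1] ≥ 1/2 + γ }. Then S is an independent set of G with |S| ≥ (1/2 − ε − 2δ)·n. -/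

import Mathlib

/-!
The marginals `p u = Pr[X_u = 1]` form a fractional independent set: `p u + p v ≤ 1` on every edge.
Hence two adjacent vertices cannot both have `p` above `1/2`. For the size, an edge with both
endpoints below `1/2 + γ` satisfies `p u + p v ≤ 1/2 + γ + 2 p u p v`, while an edge meeting the
threshold set `S` satisfies `p u + p v ≤ 1`. Averaging over a uniformly random edge, whose endpoints
are uniformly random vertices because the graph is regular, and bounding the mean of `p u p v` by
its root mean square gives `2 ∑ p ≤ |S| + (1/2 + γ + 2√κ) n`, where `κ` is the local correlation.
-/

-- `prEvent w E` is the probability of the event `E` under the finitely supported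
-- probability distribution given by the weight function `w`.
open scoped Classical in
noncomputable def prEvent {Ω : Type*} [Fintype Ω] (w : Ω → ℝ) (E : Ω → Prop) : ℝ :=
  ∑ ω ∈ Finset.univ.filter E, w ω

open scoped BigOperators

section Real

lemma sum_le_card_mul_sqrt_expect_sq {ι : Type*} (s : Finset ι) (f : ι → ℝ) :
    ∑ i ∈ s, f i ≤ s.card * √(𝔼 i ∈ s, f i ^ 2) := by
  have hmean : 𝔼 i ∈ s, f i ≤ √(𝔼 i ∈ s, f i ^ 2) := by
    simp only [Finset.expect_eq_sum_div_card]
    exact Real.le_sqrt_of_sq_le sum_div_card_sq_le_sum_sq_div_card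
  calc ∑ i ∈ s, f i = s.card * 𝔼 i ∈ s, f i := (Finset.card_mul_expect s f).symm
    _ ≤ s.card * √(𝔼 i ∈ s, f i ^ 2) := by gcongr

lemma add_le_add_two_mul_mul {a b t : ℝ} (ha : 0 ≤ a) (hb : 0 ≤ b) (ht : 1 / 2 ≤ t)
    (hat : a ≤ t) (hbt : b ≤ t) : a + b ≤ t + 2 * (a * b) := by
  have hab : 0 ≤ a * b := mul_nonneg ha hb
  rcases le_total (a + b) t with h | h
  · linarith
  · have hprod : t * (a + b - t) ≤ a * b := by
      linarith [mul_nonneg (sub_nonneg.2 hat) (sub_nonneg.2 hbt)]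
    have hhalf : 1 / 2 * (a + b - t) ≤ t * (a + b - t) := by gcongr
    linarith

lemma add_le_indicators_add_two_mul_mul {a b t : ℝ} (ha : 0 ≤ a) (hb : 0 ≤ b) (ht : 1 / 2 ≤ t)
    (hab : a + b ≤ 1) :
    a + b ≤ ((if t ≤ a then 1 else 0) + (if t ≤ b then 1 else 0)) / 2 + t + 2 * (a * b) := by
  have hmul : 0 ≤ a * b := mul_nonneg ha hb
  split_ifs with hta htb htb
  · linarith
  · linarith
  · linarith
  · linarith [add_le_add_two_mul_mul ha hb ht (not_le.1 hta).le (not_le.1 htb).le]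

lemma div_hundred_add_two_mul_sqrt_le {ε κ : ℝ} (hε : ε ∈ Set.Ioo (0 : ℝ) 1)
    (hκ : κ ≤ ε ^ 5 / 50) : ε / 100 + 2 * √κ ≤ ε := by
  obtain ⟨hε0, hε1⟩ := hε
  have hpow : ε ^ 5 ≤ ε ^ 2 := pow_le_pow_of_le_one hε0.le hε1.le (by norm_num)
  have hsqrt : √κ ≤ ε / 5 := by
    refine Real.sqrt_le_iff.2 ⟨by positivity, ?_⟩
    linarith [sq_nonneg ε, div_pow ε 5 2]
  linarith

end Real

section Darts

variable {V : Type*} [Fintype V] (G : SimpleGraph V) [DecidableRel G.Adj]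

lemma sum_dart_eq_sum_sum_ite {M : Type*} [AddCommMonoid M] (f : V → V → M) :
    ∑ a : G.Dart, f a.fst a.snd = ∑ u, ∑ v, if G.Adj u v then f u v else 0 := by
  rw [← Fintype.sum_prod_type', ← Finset.sum_filter]
  exact Finset.sum_bij' (fun a _ => a.toProd) (fun e he => ⟨e, (Finset.mem_filter.1 he).2⟩)
    (fun a _ => Finset.mem_filter.2 ⟨Finset.mem_univ _, a.adj⟩) (fun _ _ => Finset.mem_univ _)
    (fun _ _ => rfl) (fun _ _ => rfl) (fun _ _ => rfl)

lemma sum_dart_fst {M : Type*} [AddCommMonoid M] (f : V → M) :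
    ∑ a : G.Dart, f a.fst = ∑ u, G.degree u • f u := by
  rw [sum_dart_eq_sum_sum_ite G fun u _ => f u]
  refine Finset.sum_congr rfl fun u _ => ?_
  rw [← Finset.sum_filter, Finset.sum_const, ← G.neighborFinset_eq_filter,
    G.card_neighborFinset_eq_degree]

lemma sum_dart_snd {M : Type*} [AddCommMonoid M] (f : V → M) :
    ∑ a : G.Dart, f a.snd = ∑ u, G.degree u • f u := by
  rw [← sum_dart_fst]
  exact Equiv.sum_comp SimpleGraph.Dart.symm_involutive.toPerm fun a : G.Dart => f a.fst

variable {G} {d : ℕ}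

lemma card_dart_of_isRegularOfDegree (hreg : G.IsRegularOfDegree d) :
    Fintype.card G.Dart = Fintype.card V * d := by
  simp [G.dart_card_eq_sum_degrees, hreg.degree_eq]

lemma sum_dart_fst_add_snd_of_isRegularOfDegree (hreg : G.IsRegularOfDegree d) (f : V → ℝ) :
    ∑ a : G.Dart, (f a.fst + f a.snd) = d * (2 * ∑ u, f u) := by
  simp only [Finset.sum_add_distrib, sum_dart_fst, sum_dart_snd, hreg.degree_eq, nsmul_eq_mul,
    ← Finset.mul_sum]
  ring

end Darts

section LocalCorrelation

variable {V : Type*} [Fintype V]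

/-- The local correlation `E_{(u,v)∼G}[p(u)² p(v)²]` of a vertex weighting `p`, as an average over
the darts, that is, the ordered pairs of adjacent vertices (and `0` if there are none). -/
noncomputable def localCorrelation (G : SimpleGraph V) [DecidableRel G.Adj] (p : V → ℝ) : ℝ :=
  𝔼 a : G.Dart, p a.fst ^ 2 * p a.snd ^ 2

variable {G : SimpleGraph V} [DecidableRel G.Adj]

lemma localCorrelation_of_isRegularOfDegree {d : ℕ} (hreg : G.IsRegularOfDegree d) (p : V → ℝ) :
    localCorrelation G p = 1 / ((Fintype.card V : ℝ) * d) *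
      ∑ u, ∑ v, if G.Adj u v then p u ^ 2 * p v ^ 2 else 0 := by
  rw [localCorrelation, Fintype.expect_eq_sum_div_card, card_dart_of_isRegularOfDegree hreg,
    sum_dart_eq_sum_sum_ite G fun u v => p u ^ 2 * p v ^ 2, Nat.cast_mul, div_eq_inv_mul, one_div]

lemma sum_dart_mul_le_card_mul_sqrt_localCorrelation (p : V → ℝ) :
    ∑ a : G.Dart, p a.fst * p a.snd ≤ Fintype.card G.Dart * √(localCorrelation G p) := by
  simpa only [localCorrelation, mul_pow, Finset.card_univ] using
    sum_le_card_mul_sqrt_expect_sq Finset.univ fun a : G.Dart => p a.fst * p a.snd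

end LocalCorrelation

/-- A fractional independent set: a feasible point of the edge relaxation of the independent set
problem on `G`. The bound `p u ≤ 1` is imposed only through edges. -/
structure IsFractionalIndepSet {V : Type*} (G : SimpleGraph V) (p : V → ℝ) : Prop where
  nonneg : ∀ u, 0 ≤ p u
  add_le_one : ∀ u v, G.Adj u v → p u + p v ≤ 1

namespace IsFractionalIndepSet

variable {V : Type*} {G : SimpleGraph V} {p : V → ℝ} {t : ℝ}

lemma isIndepSet_threshold (hp : IsFractionalIndepSet G p) (ht : 1 / 2 < t) :
    G.IsIndepSet {u | t ≤ p u} := by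
  intro u (hu : t ≤ p u) v (hv : t ≤ p v) _ huv
  linarith [hp.add_le_one u v huv]

variable [Fintype V] [DecidableRel G.Adj] {d : ℕ}

lemma two_mul_sum_le (hp : IsFractionalIndepSet G p) (hd : 0 < d) (hreg : G.IsRegularOfDegree d)
    (ht : 1 / 2 ≤ t) :
    2 * ∑ u, p u ≤ (Finset.univ.filter fun u => t ≤ p u).card +
      (t + 2 * √(localCorrelation G p)) * Fintype.card V := by
  let s : V → ℝ := fun u => if t ≤ p u then 1 else 0
  have hs : ∑ u, s u = (Finset.univ.filter fun u => t ≤ p u).card := Finset.sum_boole _ _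
  have hcorr := sum_dart_mul_le_card_mul_sqrt_localCorrelation (G := G) p
  have hcard : (Fintype.card G.Dart : ℝ) = Fintype.card V * d := by
    exact_mod_cast card_dart_of_isRegularOfDegree hreg
  rw [← hs]
  refine le_of_mul_le_mul_left ?_ (Nat.cast_pos.2 hd : (0 : ℝ) < d)
  calc d * (2 * ∑ u, p u)
      = ∑ a : G.Dart, (p a.fst + p a.snd) :=
        (sum_dart_fst_add_snd_of_isRegularOfDegree hreg p).symm
    _ ≤ ∑ a : G.Dart, ((s a.fst + s a.snd) / 2 + t + 2 * (p a.fst * p a.snd)) :=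
        Finset.sum_le_sum fun a _ => add_le_indicators_add_two_mul_mul (hp.nonneg _) (hp.nonneg _)
          ht (hp.add_le_one _ _ a.adj)
    _ = d * ∑ u, s u + Fintype.card G.Dart * t + 2 * ∑ a : G.Dart, p a.fst * p a.snd := by
        simp only [Finset.sum_add_distrib, ← Finset.sum_div, ← Finset.mul_sum, Finset.sum_const,
          Finset.card_univ, nsmul_eq_mul]
        rw [← Finset.sum_add_distrib, sum_dart_fst_add_snd_of_isRegularOfDegree hreg s]
        ring
    _ ≤ d * ∑ u, s u + Fintype.card G.Dart * t +
          2 * (Fintype.card G.Dart * √(localCorrelation G p)) := by gcongr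
    _ = d * (∑ u, s u + (t + 2 * √(localCorrelation G p)) * Fintype.card V) := by
        rw [hcard]
        ring

end IsFractionalIndepSet

section Probability

variable {Ω : Type*} [Fintype Ω] {w : Ω → ℝ}

lemma prEvent_nonneg (hw : ∀ ω, 0 ≤ w ω) (E : Ω → Prop) : 0 ≤ prEvent w E :=
  Finset.sum_nonneg fun ω _ => hw ω

lemma prEvent_add_prEvent_le (hw : ∀ ω, 0 ≤ w ω) (E F : Ω → Prop) :
    prEvent w E + prEvent w F ≤ ∑ ω, w ω + prEvent w fun ω => E ω ∧ F ω := by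
  classical
  have hand : prEvent w (fun ω => E ω ∧ F ω) =
      ∑ ω ∈ Finset.univ.filter E ∩ Finset.univ.filter F, w ω := by
    rw [prEvent, ← Finset.filter_and]
    congr!
  rw [hand, prEvent, prEvent, ← Finset.sum_union_inter]
  gcongr
  · exact fun ω _ _ => hw ω
  · exact Finset.subset_univ _

lemma isFractionalIndepSet_prEvent {V : Type*} {G : SimpleGraph V} (hw : ∀ ω, 0 ≤ w ω)
    (hw1 : ∑ ω, w ω ≤ 1) {E : V → Ω → Prop}
    (hE : ∀ u v, G.Adj u v → prEvent w (fun ω => E u ω ∧ E v ω) = 0) :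
    IsFractionalIndepSet G fun u => prEvent w (E u) where
  nonneg u := prEvent_nonneg hw (E u)
  add_le_one u v huv := by linarith [prEvent_add_prEvent_le hw (E u) (E v), hE u v huv]

end Probability

theorem independent_set_from_low_local_correlation_general {V : Type*} [Fintype V]
    {G : SimpleGraph V} [DecidableRel G.Adj] {d : ℕ} (hd : 0 < d) (hreg : G.IsRegularOfDegree d)
    {p : V → ℝ} (hp : IsFractionalIndepSet G p) {γ δ : ℝ} (hγ : 0 < γ)
    (hsize : (1 / 2 - δ) * Fintype.card V ≤ ∑ u, p u)
    {S : Finset V} (hS : S = Finset.univ.filter fun u => 1 / 2 + γ ≤ p u) :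
    G.IsIndepSet S ∧
      (1 / 2 - (γ + 2 * √(localCorrelation G p)) - 2 * δ) * Fintype.card V ≤ S.card := by
  subst hS
  constructor
  · simpa only [Finset.coe_filter_univ] using hp.isIndepSet_threshold (by linarith)
  · linarith [hp.two_mul_sum_le hd hreg (t := 1 / 2 + γ) (by linarith)]

open scoped Classical in
/-- **Core of the main independent-set theorem.**
Let `G` be a `d`-regular simple graph on `n` vertices and `X = (X₁,…,Xₙ)` a
random vector (given by the weights `w` on a finite sample space `Ω`) with
values in `{0,1}ⁿ`, modeled as `Fin n → Fin 2`. Assume: (i) for every edge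
`(u,v)`, `Pr[Xᵤ = 1 ∧ Xᵥ = 1] = 0`; (ii) `∑ᵤ Pr[Xᵤ = 1] ≥ (1/2 − δ)·n`; and
(iii) the local correlation bound
`E_{(u,v)∼G}[Pr[Xᵤ = 1]²·Pr[Xᵥ = 1]²] ≤ ε⁵/50`. Then, with `γ = ε/100`, the set
`S = {u : Pr[Xᵤ = 1] ≥ 1/2 + γ}` is an independent set of `G` of size at least
`(1/2 − ε − 2δ)·n`. -/
theorem independent_set_from_low_local_correlation
    {n d : ℕ} (hd : 0 < d) (ε δ : ℝ)
    (hε : ε ∈ Set.Ioo (0 : ℝ) 1) (hδ : δ ∈ Set.Ioo (0 : ℝ) 1)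
    (G : SimpleGraph (Fin n)) [DecidableRel G.Adj] (hreg : G.IsRegularOfDegree d)
    {Ω : Type*} [Fintype Ω] (w : Ω → ℝ)
    (hw : ∀ ω, 0 ≤ w ω) (hw1 : ∑ ω, w ω = 1)
    (X : Ω → Fin n → Fin 2)
    (hedge : ∀ u v, G.Adj u v → prEvent w (fun ω => X ω u = 1 ∧ X ω v = 1) = 0)
    (hsize : (1/2 - δ) * n ≤ ∑ u, prEvent w (fun ω => X ω u = 1))
    (hlocal : (1 / ((n : ℝ) * d)) * ∑ u, ∑ v,
        (if G.Adj u v then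
          prEvent w (fun ω => X ω u = 1) ^ 2 * prEvent w (fun ω => X ω v = 1) ^ 2
        else 0) ≤ ε ^ 5 / 50)
    (S : Finset (Fin n))
    (hS : S = Finset.univ.filter fun u => 1/2 + ε/100 ≤ prEvent w (fun ω => X ω u = 1)) :
    (∀ u ∈ S, ∀ v ∈ S, ¬ G.Adj u v) ∧ (1/2 - ε - 2 * δ) * n ≤ (S.card : ℝ) := by
  have hp := isFractionalIndepSet_prEvent (E := fun u ω => X ω u = 1) hw hw1.le hedge
  have hκ : ε / 100 + 2 * √(localCorrelation G _) ≤ ε :=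
    div_hundred_add_two_mul_sqrt_le hε <| by
      simpa only [localCorrelation_of_isRegularOfDegree hreg, Fintype.card_fin] using hlocal
  obtain ⟨hindep, hcard⟩ := independent_set_from_low_local_correlation_general hd hreg hp
    (div_pos hε.1 (by norm_num)) (by simpa only [Fintype.card_fin] using hsize) hS
  rw [Fintype.card_fin] at hcard
  exact ⟨fun u hu v hv huv => hindep hu hv huv.ne huv, le_trans (by gcongr) hcard⟩
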